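/- Let m ≥ 1 and let A : {0,1}^m → ℝ satisfy E_A[x_S] = 2^{−|S|} for every S ⊆ [m] with |S| < m (in particular Σ_x A(x) = 1). Then for every x ∈ {0,1}^m, A(x) = 2^{−m} + (−1)^{z(x)} · δ(A), where z(x) denotes the number of coordinates of x equal to 0 and δ(A) := A(1,…,1) − 2^{−m}. -/

import Mathlib

/-- The `S`-moment `E_A[x_S]` of a function `A` on `{0,1}^m`. -/
noncomputable def momentOf {m : ℕ} (A : (Fin m → Bool) → ℝ) (S : Finset (Fin m)) : ℝ :=
  ∑ x ∈ Finset.univ.filter (fun x : Fin m → Bool => ∀ i ∈ S, x i = true), A x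

/-!
Identify a point of the cube with its set of zeros. The points with `x i = 1` for all `i ∈ S` are
then the subsets of `Sᶜ`, so that moments are subset sums. If `A` and `B` have the same moments of
degree less than `m`, the subset sums of `A - B` vanish over every nonempty set, as do those of
`T ↦ (-1) ^ #T`; since subset sums determine a function, `A - B` is a multiple of the latter.
The uniform distribution is the case of constant `B`.
-/

open Finset

section SubsetSums

variable {α M G : Type*}

theorem eq_of_sum_powerset_eq [AddCancelCommMonoid M] {f g : Finset α → M}
    (h : ∀ U : Finset α, ∑ T ∈ U.powerset, f T = ∑ T ∈ U.powerset, g T) (U : Finset α) :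
    f U = g U := by
  classical
  induction U using Finset.strongInduction with
  | H U ih =>
    have hproper : ∑ T ∈ U.ssubsets, f T = ∑ T ∈ U.ssubsets, g T :=
      sum_congr rfl fun T hT => ih T (mem_ssubsets.mp hT)
    have hU := h U
    rw [← add_sum_erase _ f (mem_powerset_self U), ← add_sum_erase _ g (mem_powerset_self U)] at hU
    exact add_right_cancel (hU.trans (congrArg (g U + ·) hproper.symm))

theorem eq_neg_one_pow_card_smul_of_sum_powerset_eq_zero [AddCommGroup G] {f : Finset α → G}
    (h : ∀ U : Finset α, U.Nonempty → ∑ T ∈ U.powerset, f T = 0) (U : Finset α) :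
    f U = (-1 : ℤ) ^ #U • f ∅ := by
  refine eq_of_sum_powerset_eq (g := fun T => (-1 : ℤ) ^ #T • f ∅) (fun V => ?_) U
  rcases V.eq_empty_or_nonempty with rfl | hV
  · simp
  · rw [h V hV, ← sum_smul, sum_powerset_neg_one_pow_card_of_nonempty hV, zero_smul]

end SubsetSums

section Cube

variable {ι M G : Type*} [Fintype ι] [DecidableEq ι]

/-- The `S`-moment of a function on the cube `{0,1}^ι` with values in an additive monoid; for
`ι = Fin m` and real values it is `momentOf`. -/
def cubeMoment [AddCommMonoid M] (A : (ι → Bool) → M) (S : Finset ι) : M :=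
  ∑ x with ∀ i ∈ S, x i = true, A x

/-- The correspondence between points of the cube `{0,1}^ι` and their sets of zero coordinates. -/
@[simps]
def zeroSetEquiv : (ι → Bool) ≃ Finset ι where
  toFun x := {i | x i = false}
  invFun T i := decide (i ∉ T)
  left_inv x := by ext i; simp
  right_inv T := by ext i; simp

theorem cubeMoment_eq_sum_powerset_compl [AddCommMonoid M] (A : (ι → Bool) → M) (S : Finset ι) :
    cubeMoment A S = ∑ T ∈ Sᶜ.powerset, A (zeroSetEquiv.symm T) := by
  refine sum_equiv zeroSetEquiv (fun x => ?_) (fun x _ => by rw [Equiv.symm_apply_apply])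
  simp only [mem_filter_univ, zeroSetEquiv_apply, mem_powerset, subset_iff, mem_compl]
  exact forall_congr' fun i => by rw [← Bool.not_eq_true, not_imp_not]

theorem cubeMoment_const [AddCommMonoid M] (c : M) (S : Finset ι) :
    cubeMoment (fun _ => c) S = 2 ^ #Sᶜ • c := by
  rw [cubeMoment_eq_sum_powerset_compl, sum_const, card_powerset]

theorem cubeMoment_const_half_pow_card {K : Type*} [Semifield K] [NeZero (2 : K)] (S : Finset ι) :
    cubeMoment (fun _ => (1 / 2 : K) ^ Fintype.card ι) S = (1 / 2) ^ #S := by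
  rw [cubeMoment_const, ← card_add_card_compl S, pow_add, nsmul_eq_mul, mul_left_comm,
    Nat.cast_pow, Nat.cast_ofNat, ← mul_pow, mul_one_div_cancel two_ne_zero, one_pow, mul_one]

theorem stmt_11_general [AddCommGroup G] (A B : (ι → Bool) → G)
    (hAB : ∀ S : Finset ι, #S < Fintype.card ι → cubeMoment A S = cubeMoment B S)
    (x : ι → Bool) :
    A x = B x + (-1 : ℤ) ^ #{i | x i = false} • (A (fun _ => true) - B (fun _ => true)) := by
  let D (T : Finset ι) : G := A (zeroSetEquiv.symm T) - B (zeroSetEquiv.symm T)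
  have hD (U : Finset ι) (hU : U.Nonempty) : ∑ T ∈ U.powerset, D T = 0 := by
    have hmoment := hAB Uᶜ (card_compl_lt_iff_nonempty U |>.mpr hU)
    simp only [cubeMoment_eq_sum_powerset_compl, compl_compl] at hmoment
    rw [sum_sub_distrib, hmoment, sub_self]
  have hx := eq_neg_one_pow_card_smul_of_sum_powerset_eq_zero hD (zeroSetEquiv x)
  have hempty : zeroSetEquiv.symm (∅ : Finset ι) = fun _ => true := by ext i; simp
  simp only [D, Equiv.symm_apply_apply, hempty] at hx
  exact sub_eq_iff_eq_add'.mp hx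

end Cube

theorem momentOf_eq_cubeMoment {m : ℕ} (A : (Fin m → Bool) → ℝ) (S : Finset (Fin m)) :
    momentOf A S = cubeMoment A S := by
  unfold momentOf cubeMoment
  congr!

/-- if `A : {0,1}^m → ℝ` agrees with the uniform distribution on all moments
of degree less than `m`, then `A(x) = 2^{-m} + (-1)^{z(x)}·δ(A)` where `z(x)` is the number
of zero bits of `x` and `δ(A) = A(1,…,1) − 2^{-m}`. -/
theorem stmt_11 (m : ℕ) (hm : 1 ≤ m) (A : (Fin m → Bool) → ℝ)
    (hA : ∀ S : Finset (Fin m), S.card < m → momentOf A S = (1/2 : ℝ) ^ S.card) :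
    ∀ x : Fin m → Bool,
      A x = (1/2 : ℝ) ^ m
        + (-1 : ℝ) ^ ((Finset.univ.filter (fun i => x i = false)).card)
          * (A (fun _ => true) - (1/2 : ℝ) ^ m) := by
  simpa using stmt_11_general A (fun _ => (1 / 2) ^ Fintype.card (Fin m)) fun S hS => by
    rw [← momentOf_eq_cubeMoment, hA S (by simpa using hS), cubeMoment_const_half_pow_card]
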